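/- Let η > 0, let ℓ ≥ 2 and let r₂, …, r_ℓ be positive integers. Then there exists ρ > 0 and n₀ such that for every d ∈ (0,1] and every (ρ,d)-dense graph G with at least n₀ vertices, t_{K(1,r₂,r₃,…,r_ℓ)}(G) ≥ (d^{r₂} − η) · t_{K(r₂+1,r₃,…,r_ℓ)}(G). -/

import Mathlib

open MeasureTheory

/-- The homomorphism density `t_H(G)`. -/
noncomputable def homDensity {α β : Type*} [Fintype α] [Fintype β]
    (H : SimpleGraph α) (G : SimpleGraph β) : ℝ :=
  (Nat.card (H →g G) : ℝ) / (Fintype.card β : ℝ) ^ (Fintype.card α)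

/-- The number of edges of a graph. -/
noncomputable def edgeCount {α : Type*} (H : SimpleGraph α) : ℕ :=
  Nat.card H.edgeSet

/-- `G` is `(ρ,d)`-dense: every vertex subset `X` with `|X| ≥ ρ|V(G)|`
spans at least `(d/2)|X|²` edges. -/
def LocallyDense {β : Type*} [Fintype β] (G : SimpleGraph β) (ρ d : ℝ) : Prop :=
  ∀ X : Finset β, ρ * (Fintype.card β : ℝ) ≤ (X.card : ℝ) →
    d / 2 * (X.card : ℝ) ^ 2 ≤
      (Nat.card {e : Sym2 β // e ∈ G.edgeSet ∧ ∀ v ∈ e, v ∈ X} : ℝ)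

/-! Write `K(1, r₂, …)` as the join of the star `K(1, r₂)` with `H = K(r₃, …)`, and
`K(r₂ + 1, r₃, …)` as the join of the edgeless graph on `r₂ + 1` vertices with the same `H`. A
homomorphism from such a join to `G` is a homomorphism `φ` from `H` to `G` together with a
homomorphism from the star, respectively the edgeless graph, into the common neighbourhood `N(φ)`.
If `N(φ)` has at least `ρ|V(G)|` vertices, then local density and the power mean inequality give
at least `d ^ r₂ * |N(φ)| ^ (r₂ + 1)` stars; the smaller neighbourhoods contribute at most
`ρ ^ (r₂ + 1)` to the density altogether. We may assume `d ^ r₂ > η`, and then embedding a clique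
greedily through vertices of large degree bounds `t_{K(r₂ + 1, r₃, …)}(G)` below by a constant
depending only on `η` and the `rᵢ`, so that a small `ρ` makes the error at most `η` times this
density. -/

universe u

variable {α β γ κ : Type*}

section Join

/-- The join of two graphs: their disjoint union together with all edges between them. The complete
multipartite graphs are the iterated joins of edgeless graphs. -/
def graphJoin (G : SimpleGraph α) (H : SimpleGraph β) : SimpleGraph (α ⊕ β) :=
  (G ⊕g H) ⊔ completeBipartiteGraph α β

infixl:60 " ∨g " => graphJoin

/-- Commutativity of the join. -/
def graphJoin.comm (G : SimpleGraph α) (H : SimpleGraph β) : G ∨g H ≃g H ∨g G where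
  toEquiv := Equiv.sumComm α β
  map_rel_iff' := by rintro (_ | _) (_ | _) <;> simp [graphJoin]

/-- Associativity of the join. -/
def graphJoin.assoc (G : SimpleGraph α) (H : SimpleGraph β) (K : SimpleGraph γ) :
    (G ∨g H) ∨g K ≃g G ∨g (H ∨g K) where
  toEquiv := Equiv.sumAssoc α β γ
  map_rel_iff' := by rintro ((_ | _) | _) ((_ | _) | _) <;> simp [graphJoin]

/-- The join respects isomorphisms of its right factor. -/
def graphJoin.congrRight (G : SimpleGraph α) {H : SimpleGraph β} {H' : SimpleGraph γ}
    (e : H ≃g H') : G ∨g H ≃g G ∨g H' where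
  toEquiv := Equiv.sumCongr (Equiv.refl α) e.toEquiv
  map_rel_iff' := by
    rintro (_ | v) (_ | w)
    case inr.inr => simpa [graphJoin] using e.map_adj_iff (v := v) (w := w)
    all_goals simp [graphJoin]

/-- A complete multipartite graph is the join of its first, edgeless, part with the complete
multipartite graph on the remaining parts. -/
def completeMultipartiteGraphSuccIso {k : ℕ} (V : Fin (k + 1) → Type*) :
    SimpleGraph.completeMultipartiteGraph V ≃g (⊥ : SimpleGraph (V 0)) ∨g
      SimpleGraph.completeMultipartiteGraph fun i : Fin k => V i.succ where
  toFun x := Fin.cases (motive := fun i => V i → V 0 ⊕ Σ i : Fin k, V i.succ)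
    Sum.inl (fun i v => Sum.inr ⟨i, v⟩) x.1 x.2
  invFun := Sum.elim (Sigma.mk 0) fun x => ⟨x.1.succ, x.2⟩
  left_inv := by
    rintro ⟨i, v⟩
    cases i using Fin.cases <;> rfl
  right_inv := by rintro (v | ⟨i, v⟩) <;> rfl
  map_rel_iff' := by
    rintro ⟨i, v⟩ ⟨j, w⟩
    cases i using Fin.cases <;> cases j using Fin.cases <;>
      simp [graphJoin, Fin.succ_ne_zero, (Fin.succ_ne_zero _).symm]

end Join

section HomCount

/-- The common neighbourhood of the values of `φ`: the candidates for the image of a vertex that is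
adjacent to the whole domain of `φ`. -/
def commonNeighborSet (G : SimpleGraph β) (φ : α → β) : Set β :=
  {v | ∀ a, G.Adj (φ a) v}

/-- A homomorphism out of a join is a homomorphism out of the left factor together with a
homomorphism from the right factor into the common neighbourhood of its image. -/
def graphJoin.homEquiv (H : SimpleGraph α) (K : SimpleGraph κ) (G : SimpleGraph β) :
    (H ∨g K →g G) ≃ Σ φ : H →g G, K →g G.induce (commonNeighborSet G φ) where
  toFun f :=
    ⟨⟨f ∘ Sum.inl, fun h => f.map_adj (by simpa [graphJoin] using h)⟩,
      fun x => ⟨f (Sum.inr x), fun a => f.map_adj (by simp [graphJoin])⟩,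
      fun h => f.map_adj (by simpa [graphJoin] using h)⟩
  invFun p :=
    { toFun := Sum.elim p.1 fun x => p.2 x
      map_rel' := by
        rintro (a | x) (b | y) h
        · exact p.1.map_adj (by simpa [graphJoin] using h)
        · exact (p.2 y).2 a
        · exact ((p.2 x).2 b).symm
        · exact p.2.map_adj (by simpa [graphJoin] using h) }
  left_inv f := by ext (a | x) <;> rfl
  right_inv p := rfl

lemma natCard_graphJoin_hom [Finite β] [Finite κ] (H : SimpleGraph α) (K : SimpleGraph κ)
    (G : SimpleGraph β) [Fintype (H →g G)] :
    Nat.card (H ∨g K →g G) = ∑ φ : H →g G, Nat.card (K →g G.induce (commonNeighborSet G φ)) := by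
  rw [Nat.card_congr (graphJoin.homEquiv H K G), Nat.card_sigma]

/-- Every map out of the edgeless graph is a homomorphism. -/
def botHomEquiv (G : SimpleGraph β) : ((⊥ : SimpleGraph α) →g G) ≃ (α → β) where
  toFun f := f
  invFun f := ⟨f, fun h => h.elim⟩

lemma natCard_bot_hom [Finite α] (G : SimpleGraph β) :
    Nat.card ((⊥ : SimpleGraph α) →g G) = Nat.card β ^ Nat.card α := by
  rw [Nat.card_congr (botHomEquiv G), Nat.card_fun]

lemma natCard_bot_graphJoin_hom [Unique α] [Fintype β] [Finite κ] (K : SimpleGraph κ)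
    (G : SimpleGraph β) :
    Nat.card ((⊥ : SimpleGraph α) ∨g K →g G) =
      ∑ v : β, Nat.card (K →g G.induce (G.neighborSet v)) := by
  have := Fintype.ofFinite ((⊥ : SimpleGraph α) →g G)
  rw [natCard_graphJoin_hom]
  refine Fintype.sum_equiv ((botHomEquiv G).trans (Equiv.funUnique α β)) _ _ fun φ => ?_
  have : commonNeighborSet G φ = G.neighborSet (φ default) := by
    ext v
    simp [commonNeighborSet, Unique.forall_iff]
  rw [this]
  rfl

lemma natCard_star_hom [Unique α] [Fintype β] [Finite κ] (G : SimpleGraph β) [DecidableRel G.Adj] :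
    Nat.card ((⊥ : SimpleGraph α) ∨g (⊥ : SimpleGraph κ) →g G) =
      ∑ v : β, G.degree v ^ Nat.card κ := by
  simp only [natCard_bot_graphJoin_hom, natCard_bot_hom, Nat.card_eq_fintype_card,
    SimpleGraph.card_neighborSet_eq_degree]

lemma natCard_hom_le_of_surjective [Finite α] [Finite β] {H : SimpleGraph α} {K : SimpleGraph κ}
    (G : SimpleGraph β) (f : H →g K) (hf : Function.Surjective f) :
    Nat.card (K →g G) ≤ Nat.card (H →g G) :=
  Nat.card_le_card_of_injective (fun φ => φ.comp f) fun _ _ h =>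
    DFunLike.coe_injective (hf.injective_comp_right (congrArg DFunLike.coe h))

lemma homDensity_nonneg [Fintype α] [Fintype β] (H : SimpleGraph α) (G : SimpleGraph β) :
    0 ≤ homDensity H G := by
  unfold homDensity
  positivity

lemma homDensity_congr [Fintype α] [Fintype κ] [Fintype β] {H : SimpleGraph α} {K : SimpleGraph κ}
    (e : H ≃g K) (G : SimpleGraph β) : homDensity H G = homDensity K G := by
  rw [homDensity, homDensity, Fintype.card_congr e.toEquiv,
    (natCard_hom_le_of_surjective G e.symm.toHom e.symm.surjective).antisymm
      (natCard_hom_le_of_surjective G e.toHom e.surjective)]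

lemma card_hom_le [Fintype α] [Fintype β] (H : SimpleGraph α) (G : SimpleGraph β)
    [Fintype (H →g G)] : Fintype.card (H →g G) ≤ Fintype.card β ^ Fintype.card α := by
  classical
  rw [← Fintype.card_fun]
  exact Fintype.card_le_of_injective _ DFunLike.coe_injective

lemma sum_natCard_top_hom_neighborSet_le [Fintype β] (G : SimpleGraph β) (M : ℕ) :
    ∑ v, Nat.card ((⊤ : SimpleGraph (Fin M)) →g G.induce (G.neighborSet v)) ≤
      Nat.card ((⊤ : SimpleGraph (Fin (M + 1))) →g G) := by
  let peel : (⊤ : SimpleGraph (Fin (M + 1))) →g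
      (⊥ : SimpleGraph (Fin 1)) ∨g (⊤ : SimpleGraph (Fin M)) :=
    ⟨Fin.cases (Sum.inl 0) Sum.inr, by
      intro i j hij
      cases i using Fin.cases <;> cases j using Fin.cases <;> simp_all [graphJoin]⟩
  rw [← natCard_bot_graphJoin_hom (α := Fin 1)]
  refine natCard_hom_le_of_surjective G peel ?_
  rintro (i | i)
  · exact ⟨0, congrArg Sum.inl (Subsingleton.elim 0 i)⟩
  · exact ⟨i.succ, rfl⟩

lemma homDensity_completeMultipartiteGraph_cases_one [Fintype β] {k : ℕ} (r : Fin (k + 1) → ℕ)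
    (G : SimpleGraph β) :
    homDensity (SimpleGraph.completeMultipartiteGraph
        fun i : Fin (k + 2) => Fin (Fin.cases 1 r i)) G =
      homDensity ((⊥ : SimpleGraph (Fin 1)) ∨g ((⊥ : SimpleGraph (Fin (r 0))) ∨g
        SimpleGraph.completeMultipartiteGraph fun i : Fin k => Fin (r i.succ))) G :=
  homDensity_congr ((completeMultipartiteGraphSuccIso _).trans
    (graphJoin.congrRight _ (completeMultipartiteGraphSuccIso _))) G

lemma homDensity_completeMultipartiteGraph_update_zero [Fintype β] {k : ℕ} (r : Fin (k + 1) → ℕ)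
    (a : ℕ) (G : SimpleGraph β) :
    homDensity (SimpleGraph.completeMultipartiteGraph
        fun i : Fin (k + 1) => Fin (Function.update r 0 a i)) G =
      homDensity ((⊥ : SimpleGraph (Fin a)) ∨g
        SimpleGraph.completeMultipartiteGraph fun i : Fin k => Fin (r i.succ)) G := by
  rw [← Fin.cons_self_tail r, Fin.update_cons_zero]
  exact homDensity_congr (completeMultipartiteGraphSuccIso _) G

end HomCount

namespace LocallyDense

variable [Fintype β] {G : SimpleGraph β} {ρ ρ' d d' c : ℝ}

lemma mono (hG : LocallyDense G ρ d) (hρ : ρ ≤ ρ') (hd : d' ≤ d) : LocallyDense G ρ' d' :=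
  fun X hX => le_trans (by gcongr) (hG X (le_trans (by gcongr) hX))

lemma induce (hG : LocallyDense G ρ d) (X : Set β) [Fintype X]
    (hX : ρ * Fintype.card β ≤ ρ' * Fintype.card X) : LocallyDense (G.induce X) ρ' d := by
  intro Y hY
  let Y' := Y.map (Function.Embedding.subtype (· ∈ X))
  have edges_subset : {e | e ∈ G.edgeSet ∧ ∀ v ∈ e, v ∈ Y'} ⊆
      Sym2.map Subtype.val '' {e | e ∈ (G.induce X).edgeSet ∧ ∀ v ∈ e, v ∈ Y} := by
    rintro ⟨v, w⟩ ⟨hvw, hY'⟩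
    obtain ⟨v, hv, rfl⟩ := Finset.mem_map.1 (hY' v (Sym2.mem_mk_left v w))
    obtain ⟨w, hw, rfl⟩ := Finset.mem_map.1 (hY' w (Sym2.mem_mk_right _ w))
    exact ⟨s(v, w), ⟨hvw, by simp [hv, hw]⟩, rfl⟩
  have card_edges := (Set.ncard_le_ncard edges_subset).trans_eq
    (Set.ncard_image_of_injective _ (Sym2.map.injective Subtype.val_injective))
  have hG' := hG Y' (by simpa [Y'] using hX.trans hY)
  rw [Finset.card_map] at hG'
  exact hG'.trans (Nat.cast_le.2 card_edges)

lemma mul_card_sq_le_sum_degree [DecidableRel G.Adj] (hG : LocallyDense G ρ d) (hρ : ρ ≤ 1) :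
    d * (Fintype.card β : ℝ) ^ 2 ≤ ∑ v, (G.degree v : ℝ) := by
  classical
  have edges_le : d / 2 * (Fintype.card β : ℝ) ^ 2 ≤ G.edgeFinset.card := by
    have := hG Finset.univ (by simpa using mul_le_of_le_one_left (Nat.cast_nonneg _) hρ)
    simp only [Finset.mem_univ, implies_true, and_true, Finset.card_univ] at this
    rwa [← G.card_edgeSet, ← Nat.card_eq_fintype_card (α := G.edgeSet)]
  have degree_sum : ∑ v, (G.degree v : ℝ) = 2 * G.edgeFinset.card := by
    exact_mod_cast G.sum_degrees_eq_twice_card_edges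
  linarith

lemma le_natCard_star_hom [Unique α] (hG : LocallyDense G ρ d) (hρ : ρ ≤ 1) (hd : 0 ≤ d) (s : ℕ) :
    d ^ s * (Fintype.card β : ℝ) ^ (s + 1) ≤
      Nat.card ((⊥ : SimpleGraph α) ∨g (⊥ : SimpleGraph (Fin s)) →g G) := by
  classical
  rw [natCard_star_hom, Nat.card_fin]
  push_cast
  cases s with
  | zero => simp
  | succ t =>
    cases isEmpty_or_nonempty β
    · simp
    have hn : (0 : ℝ) < (Fintype.card β : ℝ) ^ t := by positivity
    refine le_of_mul_le_mul_left ?_ hn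
    calc (Fintype.card β : ℝ) ^ t * (d ^ (t + 1) * (Fintype.card β : ℝ) ^ (t + 1 + 1))
        = (d * (Fintype.card β : ℝ) ^ 2) ^ (t + 1) := by ring
      _ ≤ (∑ v, (G.degree v : ℝ)) ^ (t + 1) := by
          gcongr
          exact hG.mul_card_sq_le_sum_degree hρ
      _ ≤ (Fintype.card β : ℝ) ^ t * ∑ v, (G.degree v : ℝ) ^ (t + 1) :=
          pow_sum_le_card_mul_sum_pow (fun v _ => Nat.cast_nonneg _) t

lemma mul_card_le_card_filter_degree [DecidableRel G.Adj] (hG : LocallyDense G ρ (2 * c))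
    (hρ : ρ ≤ 1) (hc : 0 ≤ c) :
    c * Fintype.card β ≤ Finset.card {v | c * Fintype.card β ≤ G.degree v} := by
  set n := (Fintype.card β : ℝ)
  set S : Finset β := {v | c * n ≤ G.degree v}
  have degree_le (v : β) : (G.degree v : ℝ) ≤ (if c * n ≤ G.degree v then n else 0) + c * n := by
    split_ifs with hv
    · have : (G.degree v : ℝ) ≤ n := Nat.cast_le.2 (G.degree_lt_card_verts v).le
      linarith [show 0 ≤ c * n by positivity]
    · linarith
  have sum_le : ∑ v, (G.degree v : ℝ) ≤ S.card * n + n * (c * n) := by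
    refine (Finset.sum_le_sum fun v _ => degree_le v).trans_eq ?_
    rw [Finset.sum_add_distrib, ← Finset.sum_filter]
    simp [S, n]
  cases isEmpty_or_nonempty β
  · simp [n]
  · have hn : 0 < n := Nat.cast_pos.2 Fintype.card_pos
    refine le_of_mul_le_mul_right ?_ hn
    linarith [hG.mul_card_sq_le_sum_degree hρ]

theorem le_natCard_hom_top (hc : 0 < c) (hc1 : c ≤ 1) (M : ℕ)
    (hG : LocallyDense G (c ^ M) (2 * c)) :
    c ^ M ^ 2 * (Fintype.card β : ℝ) ^ M ≤ Nat.card ((⊤ : SimpleGraph (Fin M)) →g G) := by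
  classical
  induction M generalizing β with
  | zero => simp
  | succ M ih =>
    set n := (Fintype.card β : ℝ)
    set S : Finset β := {v | c * n ≤ G.degree v}
    have step (v : β) (hv : v ∈ S) : c ^ M ^ 2 * (c * n) ^ M ≤
        Nat.card ((⊤ : SimpleGraph (Fin M)) →g G.induce (G.neighborSet v)) := by
      have hdeg : c * n ≤ Fintype.card (G.neighborSet v) := by
        rw [G.card_neighborSet_eq_degree]
        exact (Finset.mem_filter.1 hv).2
      refine le_trans (by gcongr) (ih (hG.induce (G.neighborSet v) ?_))
      rw [pow_succ, mul_assoc]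
      gcongr
    calc c ^ (M + 1) ^ 2 * n ^ (M + 1)
        ≤ c ^ (M ^ 2 + M + 1) * n ^ (M + 1) := by
          gcongr ?_ * _
          exact pow_le_pow_of_le_one hc.le hc1 (by nlinarith)
      _ = c * n * (c ^ M ^ 2 * (c * n) ^ M) := by ring
      _ ≤ S.card * (c ^ M ^ 2 * (c * n) ^ M) := by
          gcongr
          exact hG.mul_card_le_card_filter_degree (pow_le_one₀ hc.le hc1) hc.le
      _ = ∑ v ∈ S, c ^ M ^ 2 * (c * n) ^ M := by simp
      _ ≤ ∑ v ∈ S, (Nat.card ((⊤ : SimpleGraph (Fin M)) →g G.induce (G.neighborSet v)) : ℝ) :=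
          Finset.sum_le_sum step
      _ ≤ ∑ v, (Nat.card ((⊤ : SimpleGraph (Fin M)) →g G.induce (G.neighborSet v)) : ℝ) :=
          Finset.sum_le_univ_sum_of_nonneg fun _ => Nat.cast_nonneg _
      _ ≤ Nat.card ((⊤ : SimpleGraph (Fin (M + 1))) →g G) := by
          exact_mod_cast sum_natCard_top_hom_neighborSet_le G M

theorem le_homDensity [Fintype α] [Nonempty β] (H : SimpleGraph α) (hc : 0 < c) (hc1 : c ≤ 1)
    (hG : LocallyDense G (c ^ Fintype.card α) (2 * c)) :
    c ^ Fintype.card α ^ 2 ≤ homDensity H G := by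
  let e : H →g (⊤ : SimpleGraph (Fin (Fintype.card α))) :=
    ⟨Fintype.equivFin α, fun h => by simpa using h.ne⟩
  rw [homDensity, le_div_iff₀ (by positivity)]
  refine (hG.le_natCard_hom_top hc hc1).trans ?_
  exact_mod_cast natCard_hom_le_of_surjective G e (Fintype.equivFin α).surjective

end LocallyDense

section JoinInequality

variable [Fintype α] [Fintype κ] [Fintype β] (H : SimpleGraph α) (K : SimpleGraph κ)
  (G : SimpleGraph β) {a ρ : ℝ}

lemma mul_natCard_graphJoin_bot_hom_le (ha : a ≤ 1) (hρ : 0 ≤ ρ)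
    (hK : ∀ X : Set β, ρ * Fintype.card β ≤ X.ncard →
      a * (X.ncard : ℝ) ^ Fintype.card κ ≤ Nat.card (K →g G.induce X)) :
    a * Nat.card (H ∨g (⊥ : SimpleGraph κ) →g G) ≤
      Nat.card (H ∨g K →g G) +
        ρ ^ Fintype.card κ * (Fintype.card β : ℝ) ^ (Fintype.card α + Fintype.card κ) := by
  have := Fintype.ofFinite (H →g G)
  set n := (Fintype.card β : ℝ)
  have le_add_error (X : Set β) :
      a * (X.ncard : ℝ) ^ Fintype.card κ ≤
        Nat.card (K →g G.induce X) + (ρ * n) ^ Fintype.card κ := by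
    rcases le_or_gt (ρ * n) X.ncard with hX | hX
    · exact (hK X hX).trans (le_add_of_nonneg_right (by positivity))
    · calc a * (X.ncard : ℝ) ^ Fintype.card κ ≤ 1 * (ρ * n) ^ Fintype.card κ := by gcongr
        _ ≤ _ := by rw [one_mul]; exact le_add_of_nonneg_left (by positivity)
  have card_homs : (Fintype.card (H →g G) : ℝ) ≤ n ^ Fintype.card α := by
    rw [← Nat.cast_pow]
    exact Nat.cast_le.2 (card_hom_le H G)
  simp only [natCard_graphJoin_hom, natCard_bot_hom, Nat.card_coe_set_eq,
    Nat.card_eq_fintype_card, Nat.cast_sum, Nat.cast_pow, Finset.mul_sum]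
  calc ∑ φ : H →g G, a * ((commonNeighborSet G φ).ncard : ℝ) ^ Fintype.card κ
      ≤ ∑ φ : H →g G, (Nat.card (K →g G.induce (commonNeighborSet G φ)) +
          (ρ * n) ^ Fintype.card κ) := Finset.sum_le_sum fun φ _ => le_add_error _
    _ = ∑ φ : H →g G, (Nat.card (K →g G.induce (commonNeighborSet G φ)) : ℝ) +
          Fintype.card (H →g G) * (ρ * n) ^ Fintype.card κ := by simp [Finset.sum_add_distrib]
    _ ≤ ∑ φ : H →g G, (Nat.card (K →g G.induce (commonNeighborSet G φ)) : ℝ) +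
          n ^ Fintype.card α * (ρ * n) ^ Fintype.card κ := by gcongr
    _ = _ := by ring

lemma mul_homDensity_graphJoin_bot_le [Nonempty β] (ha : a ≤ 1) (hρ : 0 ≤ ρ)
    (hK : ∀ X : Set β, ρ * Fintype.card β ≤ X.ncard →
      a * (X.ncard : ℝ) ^ Fintype.card κ ≤ Nat.card (K →g G.induce X)) :
    a * homDensity (H ∨g (⊥ : SimpleGraph κ)) G ≤
      homDensity (H ∨g K) G + ρ ^ Fintype.card κ := by
  rw [homDensity, homDensity, Fintype.card_sum, ← mul_div_assoc, div_add' _ _ _ (by positivity)]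
  gcongr
  exact mul_natCard_graphJoin_bot_hom_le H K G ha hρ hK

end JoinInequality

lemma LocallyDense.mul_homDensity_graphJoin_bot_le_star [Fintype α] [Fintype β] [Nonempty β]
    {G : SimpleGraph β} {ρ d : ℝ} (hG : LocallyDense G ρ d) (hρ : 0 ≤ ρ) (hd : 0 ≤ d) (hd1 : d ≤ 1)
    (H : SimpleGraph α) (s : ℕ) :
    d ^ s * homDensity (H ∨g (⊥ : SimpleGraph (Fin 1 ⊕ Fin s))) G ≤
      homDensity (H ∨g ((⊥ : SimpleGraph (Fin 1)) ∨g (⊥ : SimpleGraph (Fin s)))) G +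
        ρ ^ (s + 1) := by
  classical
  have card_star : Fintype.card (Fin 1 ⊕ Fin s) = s + 1 := by simp [add_comm]
  rw [← card_star]
  refine mul_homDensity_graphJoin_bot_le H _ G (pow_le_one₀ hd hd1) hρ fun X hX => ?_
  rw [← Nat.card_coe_set_eq, Nat.card_eq_fintype_card] at hX ⊢
  rw [card_star]
  exact (hG.induce X (by rwa [one_mul])).le_natCard_star_hom le_rfl hd s

theorem stmt10_general [Fintype α] (H : SimpleGraph α) {s : ℕ} (hs : s ≠ 0) {η : ℝ} (hη : 0 < η) :
    ∃ ρ > 0, ∀ d, 0 < d → d ≤ 1 → ∀ (β : Type u) [Fintype β] [Nonempty β] (G : SimpleGraph β),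
      LocallyDense G ρ d →
        (d ^ s - η) * homDensity ((⊥ : SimpleGraph (Fin (s + 1))) ∨g H) G ≤
          homDensity ((⊥ : SimpleGraph (Fin 1)) ∨g ((⊥ : SimpleGraph (Fin s)) ∨g H)) G := by
  set c := η / 2
  set M := Fintype.card (α ⊕ Fin 1 ⊕ Fin s)
  obtain ⟨ρ, hρ, hρM, hρ1, hρη⟩ : ∃ ρ > 0, ρ ≤ c ^ M ∧ ρ ≤ 1 ∧ ρ ≤ η * c ^ M ^ 2 :=
    ⟨min (c ^ M) (min 1 (η * c ^ M ^ 2)), by positivity, by simp⟩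
  refine ⟨ρ, hρ, fun d hd hd1 β _ _ G hG => ?_⟩
  let botIso : (⊥ : SimpleGraph (Fin (s + 1))) ≃g (⊥ : SimpleGraph (Fin 1 ⊕ Fin s)) :=
    ⟨Fintype.equivOfCardEq (by simp [add_comm]), by simp⟩
  rw [homDensity_congr ((graphJoin.comm _ H).trans (graphJoin.congrRight H botIso)),
    homDensity_congr ((graphJoin.assoc _ _ H).symm.trans (graphJoin.comm _ H))]
  set t := homDensity (H ∨g (⊥ : SimpleGraph (Fin 1 ⊕ Fin s))) G
  rcases le_or_gt (d ^ s) η with hle | hlt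
  · exact (mul_nonpos_of_nonpos_of_nonneg (sub_nonpos.2 hle) (homDensity_nonneg _ G)).trans
      (homDensity_nonneg _ G)
  have hηd : 2 * c ≤ d := by
    rw [mul_div_cancel₀ η two_ne_zero]
    exact hlt.le.trans (pow_le_of_le_one hd.le hd1 hs)
  have le_t : c ^ M ^ 2 ≤ t :=
    (hG.mono hρM hηd).le_homDensity _ (by positivity) (by linarith)
  have error_le : ρ ^ (s + 1) ≤ η * t :=
    calc ρ ^ (s + 1) ≤ ρ := pow_le_of_le_one hρ.le hρ1 s.succ_ne_zero
      _ ≤ η * c ^ M ^ 2 := hρη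
      _ ≤ η * t := by gcongr
  linarith [hG.mul_homDensity_graphJoin_bot_le_star hρ.le hd.le hd1 H s]

theorem stmt10 (η : ℝ) (hη : 0 < η) (m : ℕ) (hm : 0 < m) (r : Fin m → ℕ)
    (hr : ∀ i, 1 ≤ r i) :
    ∃ (ρ : ℝ) (n₀ : ℕ), 0 < ρ ∧
      ∀ (d : ℝ), 0 < d → d ≤ 1 →
        ∀ (β : Type) [Fintype β] (G : SimpleGraph β),
          n₀ ≤ Fintype.card β → LocallyDense G ρ d →
            homDensity
                (SimpleGraph.completeMultipartiteGraph
                  (fun i : Fin (m + 1) => Fin (Fin.cases 1 r i))) G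
              ≥ (d ^ (r ⟨0, hm⟩) - η) *
                homDensity
                  (SimpleGraph.completeMultipartiteGraph
                    (fun i : Fin m => Fin (Function.update r ⟨0, hm⟩ (r ⟨0, hm⟩ + 1) i))) G := by
  obtain ⟨k, rfl⟩ := Nat.exists_eq_add_one.2 hm
  obtain ⟨ρ, hρ, main⟩ := stmt10_general
    (SimpleGraph.completeMultipartiteGraph fun i : Fin k => Fin (r i.succ))
    (Nat.one_le_iff_ne_zero.1 (hr 0)) hη
  refine ⟨ρ, 1, hρ, fun d hd hd1 β _ G hn hG => ?_⟩
  have : Nonempty β := Fintype.card_pos_iff.1 hn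
  rw [ge_iff_le, Fin.zero_eta, homDensity_completeMultipartiteGraph_cases_one,
    homDensity_completeMultipartiteGraph_update_zero]
  exact main d hd hd1 β G hG
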